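/- arXiv:0810.2731 — 2 statements merged into one kernel-verified Lean document; each statement's English description precedes it below -/
import Mathlib

section
/- Fix an integer ℓ≥1 and let the polynomials g_{ℓ,n}^m(q,x) (0≤m≤n) be defined by the recurrence g_{ℓ,n}^n(q,x) = g_{ℓ,n}(q,x) and g_{ℓ,n}^m(q,x) = g_{ℓ,n}^{m+1}(q,x) − x·q^{ℓ(n−m−1)}·g_{ℓ,n−1}^m(q,x) for 0≤m≤n−1. Then for all 0≤m≤n one has the explicit formula g_{ℓ,n}^m(q,x) = Σ_{k=0}^{n−m} (−x)^k · [n−m choose k]_{q^ℓ} · q^{ℓ·binom(k,2)} · g_{ℓ,n−k}(q,x). -/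
/-!
Put `Q = q ^ ℓ` and let `S` be the backward shift `f ↦ (n ↦ f (n - 1))` on sequences. As a function
of `n`, the entry of the table at distance `d + 1` from the diagonal arises from the one at distance
`d` by applying `1 - x Q ^ d S`. Hence the entry at distance `d` is obtained from the diagonal
by applying `∏ i < d, (1 - x Q ^ i S)`, and the formula is Rothe's q-binomial theorem
`∏ i < d, (1 + Q ^ i y) = ∑ k ≤ d, Q ^ (k choose 2) [d choose k]_Q y ^ k` at `y = -x S`.
-/

open Finset

/-- The q-integer `[k]_q = 1 + q + ⋯ + q^{k-1}`. -/
def qint {R : Type*} [CommSemiring R] (q : R) (k : ℕ) : R := ∑ i ∈ range k, q ^ i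

/-- The Gaussian binomial coefficient `[n choose k]_q` (a polynomial in `q`, evaluated at
`q : R`), defined by the q-Pascal recurrence `[n+1,k+1]_q = [n,k]_q + q^{k+1}·[n,k+1]_q`;
it equals `(q;q)_n / ((q;q)_k (q;q)_{n-k})`. -/
def qbinom {R : Type*} [CommSemiring R] (q : R) : ℕ → ℕ → R
  | _, 0 => 1
  | 0, _ + 1 => 0
  | n + 1, k + 1 => qbinom q n k + q ^ (k + 1) * qbinom q n (k + 1)

open MvPolynomial in
/-- `g_{ℓ,n}(q,x) = Σ_{k=0}^n (x−1)(x−q^ℓ)⋯(x−q^{ℓ(k−1)}) · [(k+1)ℓ]_q ⋯ [nℓ]_q`,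
as a polynomial in `q = X 0` and `x = X 1`. -/
noncomputable def gPoly (ℓ n : ℕ) : MvPolynomial (Fin 2) ℤ :=
  ∑ k ∈ range (n + 1),
    (∏ i ∈ range k, (X 1 - (X 0 : MvPolynomial (Fin 2) ℤ) ^ (ℓ * i))) *
      ∏ j ∈ Icc (k + 1) n, qint (X 0 : MvPolynomial (Fin 2) ℤ) (j * ℓ)

theorem qbinom_zero_right {R : Type*} [CommSemiring R] (q : R) (n : ℕ) : qbinom q n 0 = 1 := by
  cases n <;> rfl

theorem qbinom_succ_succ {R : Type*} [CommSemiring R] (q : R) (n k : ℕ) :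
    qbinom q (n + 1) (k + 1) = qbinom q n k + q ^ (k + 1) * qbinom q n (k + 1) :=
  rfl

theorem qbinom_eq_zero_of_lt {R : Type*} [CommSemiring R] (q : R) {n k : ℕ} (h : n < k) :
    qbinom q n k = 0 := by
  induction n generalizing k with
  | zero =>
    cases k with
    | zero => omega
    | succ k => rfl
  | succ n ih =>
    cases k with
    | zero => omega
    | succ k => rw [qbinom_succ_succ, ih (by omega), ih (by omega), mul_zero, add_zero]

section QBinomialTheorem

variable {R A : Type*} [CommSemiring R] [CommSemiring A] [Algebra R A]

theorem pow_choose_two_mul_qbinom_succ_smul_pow (q : R) (y : A) (n k : ℕ) :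
    (q ^ (k + 1).choose 2 * qbinom q (n + 1) (k + 1)) • y ^ (k + 1) =
      (q ^ (k + 1).choose 2 * qbinom q n (k + 1)) • (q • y) ^ (k + 1) +
        y * (q ^ k.choose 2 * qbinom q n k) • (q • y) ^ k := by
  rw [qbinom_succ_succ, Nat.choose_succ_succ' k 1, Nat.choose_one_right]
  simp only [Algebra.smul_def, map_mul, map_add, map_pow]
  ring

theorem prod_one_add_pow_smul_eq_sum_qbinom (q : R) (y : A) (n : ℕ) :
    ∏ i ∈ range n, (1 + q ^ i • y) =
      ∑ k ∈ range (n + 1), (q ^ k.choose 2 * qbinom q n k) • y ^ k := by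
  induction n generalizing y with
  | zero => simp [qbinom_zero_right]
  | succ n ih =>
    -- Splitting off the factor `i = 0` replaces `y` by `q • y` in the remaining product. This makes
    -- the induction step the rule defining `qbinom` rather than the dual q-Pascal rule.
    let term (k : ℕ) : A := (q ^ k.choose 2 * qbinom q n k) • (q • y) ^ k
    have term_zero : term 0 = (q ^ Nat.choose 0 2 * qbinom q (n + 1) 0) • y ^ 0 := by
      simp [term, qbinom_zero_right]
    have term_last : term (n + 1) = 0 := by
      simp [term, qbinom_eq_zero_of_lt q n.lt_succ_self]
    calc
      ∏ i ∈ range (n + 1), (1 + q ^ i • y)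
      _ = (∏ i ∈ range n, (1 + q ^ i • q • y)) * (1 + y) := by
        simp only [prod_range_succ', pow_succ, mul_smul, pow_zero, one_smul]
      _ = ∑ k ∈ range (n + 2), term k + ∑ k ∈ range (n + 1), y * term k := by
        rw [ih, sum_range_succ term (n + 1), term_last, add_zero, ← mul_sum]
        ring
      _ = ∑ k ∈ range (n + 1), (term (k + 1) + y * term k) + term 0 := by
        rw [sum_range_succ' term, sum_add_distrib]
        ring
      _ = ∑ k ∈ range (n + 2), (q ^ k.choose 2 * qbinom q (n + 1) k) • y ^ k := by
        rw [sum_range_succ' _ (n + 1), term_zero]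
        simp only [term, pow_choose_two_mul_qbinom_succ_smul_pow]

end QBinomialTheorem

section BackwardShift

open scoped Polynomial
open Polynomial (X aeval aeval_X)

/-- The backward shift `f ↦ (n ↦ f (n - 1))` on sequences, which turns a recurrence between
neighbouring rows of a table into the application of a polynomial in one operator. Subtraction is
truncated, so the value at `0` is repeated. -/
def backwardShift (R M : Type*) [Semiring R] [AddCommMonoid M] [Module R M] :
    Module.End R (ℕ → M) :=
  LinearMap.funLeft R M (· - 1)

theorem backwardShift_apply {R M : Type*} [Semiring R] [AddCommMonoid M] [Module R M]
    (f : ℕ → M) (n : ℕ) : backwardShift R M f n = f (n - 1) :=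
  rfl

theorem backwardShift_pow_apply {R M : Type*} [Semiring R] [AddCommMonoid M] [Module R M]
    (f : ℕ → M) (k n : ℕ) : (backwardShift R M ^ k) f n = f (n - k) := by
  induction k generalizing n with
  | zero => rfl
  | succ k ih =>
    rw [pow_succ', Module.End.mul_apply, backwardShift_apply, ih, Nat.sub_sub, add_comm 1]

theorem aeval_backwardShift_prod_apply {R M : Type*} [CommSemiring R] [AddCommMonoid M]
    [Module R M] (q y : R) (f : ℕ → M) (d n : ℕ) :
    aeval (backwardShift R M) (∏ i ∈ range d, (1 + q ^ i • y • (X : R[X]))) f n =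
      ∑ k ∈ range (d + 1), (y ^ k * qbinom q d k * q ^ k.choose 2) • f (n - k) := by
  rw [prod_one_add_pow_smul_eq_sum_qbinom]
  simp only [map_sum, map_smul, map_pow, smul_pow, aeval_X, LinearMap.sum_apply,
    LinearMap.smul_apply, Finset.sum_apply, Pi.smul_apply, backwardShift_pow_apply, smul_smul]
  exact sum_congr rfl fun k _ => congrArg (· • f (n - k)) (by ring)

end BackwardShift

section DifferenceTable

open scoped Polynomial
open Polynomial (X aeval)

variable {R M : Type*} [CommRing R] [AddCommGroup M] [Module R M]

theorem difference_table_eq_aeval_backwardShift (q x : R) (f : ℕ → M) (G : ℕ → ℕ → M)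
    (hdiag : ∀ n, G n n = f n)
    (hrec : ∀ n m, m < n → G n m = G n (m + 1) - (x * q ^ (n - m - 1)) • G (n - 1) m) (m d : ℕ) :
    G (m + d) m =
      aeval (backwardShift R M) (∏ i ∈ range d, (1 + q ^ i • (-x) • (X : R[X]))) f (m + d) := by
  induction d generalizing m with
  | zero => simp [hdiag]
  | succ d ih =>
    have next_column := ih (m + 1)
    rw [add_right_comm, add_assoc] at next_column
    have aeval_factor (h : ℕ → M) (n : ℕ) :
        aeval (backwardShift R M) (1 + q ^ d • (-x) • (X : R[X])) h n =
          h n - (x * q ^ d) • h (n - 1) := by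
      simp [backwardShift_apply, sub_eq_add_neg, mul_comm x, mul_smul]
    rw [hrec _ _ (by omega), show m + (d + 1) - m - 1 = d by omega, Nat.add_succ_sub_one,
      next_column, ih m, prod_range_succ, mul_comm (∏ _ ∈ _, _), map_mul, Module.End.mul_apply,
      aeval_factor, Nat.add_succ_sub_one]

theorem q_difference_table_explicit_formula_general (q x : R) (f : ℕ → M) (G : ℕ → ℕ → M)
    (hdiag : ∀ n, G n n = f n)
    (hrec : ∀ n m, m < n → G n m = G n (m + 1) - (x * q ^ (n - m - 1)) • G (n - 1) m)
    (n m : ℕ) (hmn : m ≤ n) :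
    G n m =
      ∑ k ∈ range (n - m + 1), ((-x) ^ k * qbinom q (n - m) k * q ^ k.choose 2) • f (n - k) := by
  obtain ⟨d, rfl⟩ := Nat.exists_eq_add_of_le hmn
  rw [difference_table_eq_aeval_backwardShift q x f G hdiag hrec, aeval_backwardShift_prod_apply,
    Nat.add_sub_cancel_left]

end DifferenceTable

open MvPolynomial in
/-- If the table `G n m = g_{ℓ,n}^m(q,x)` is defined by the diagonal values
`g_{ℓ,n}^n = g_{ℓ,n}` and the recurrence
`g_{ℓ,n}^m = g_{ℓ,n}^{m+1} − x·q^{ℓ(n−m−1)}·g_{ℓ,n−1}^m`, then for `0 ≤ m ≤ n`,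
`g_{ℓ,n}^m(q,x) = Σ_{k=0}^{n−m} (−x)^k [n−m choose k]_{q^ℓ} q^{ℓ·C(k,2)} g_{ℓ,n−k}(q,x)`. -/
theorem q_difference_table_explicit_formula (ℓ : ℕ) (hℓ : 1 ≤ ℓ)
    (G : ℕ → ℕ → MvPolynomial (Fin 2) ℤ)
    (hdiag : ∀ n, G n n = gPoly ℓ n)
    (hrec : ∀ n m, m < n →
      G n m = G n (m + 1) - X 1 * (X 0 : MvPolynomial (Fin 2) ℤ) ^ (ℓ * (n - m - 1)) * G (n - 1) m) :
    ∀ n m, m ≤ n →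
      G n m = ∑ k ∈ range (n - m + 1),
        (-1 : MvPolynomial (Fin 2) ℤ) ^ k * (X 1) ^ k *
          qbinom ((X 0 : MvPolynomial (Fin 2) ℤ) ^ ℓ) (n - m) k *
          (X 0 : MvPolynomial (Fin 2) ℤ) ^ (ℓ * k.choose 2) * gPoly ℓ (n - k) := by
  simpa only [pow_mul, smul_eq_mul, neg_pow (X 1 : MvPolynomial (Fin 2) ℤ)] using
    q_difference_table_explicit_formula_general (R := MvPolynomial (Fin 2) ℤ)
      (X 0 ^ ℓ) (X 1) (gPoly ℓ) G hdiag (by simpa only [pow_mul, smul_eq_mul] using hrec)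
end

section
/- Fix an integer ℓ≥1 and define polynomials g_{ℓ,n}^m(q) for 0≤m≤n by g_{ℓ,n}^n(q) = [ℓ]_q[2ℓ]_q⋯[nℓ]_q and g_{ℓ,n}^m(q) = g_{ℓ,n}^{m+1}(q) − q^{ℓ(n−m−1)} g_{ℓ,n−1}^m(q) for 0≤m≤n−1 (this is the wreath-product q-analogue of Euler's difference table). Then every g_{ℓ,n}^m(q) is a polynomial in q with nonnegative integer coefficients. -/
/-!
Put `Q = q^ℓ` and `c = [ℓ]_q`. Re-indexed by `d = n - m`, the table is the array of iterated
`Q`-differences `Δ^d u(m) = g_{ℓ,m+d}^m` of the diagonal sequence `u`, which satisfies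
`u(m+1) = c [m+1]_Q u(m)`. The Leibniz rule for multiplication by `[m+1]_Q` turns this into the
subtraction-free relation
`Δ^{d+1} u(m+1) = c ([m+d+2]_Q Δ^{d+1} u(m) + Q^{m+d+1} [d+1]_Q Δ^d u(m))`.
Substituted into the definition of `Δ^{d+2} u(m)` it leaves a single difference,
`c [m+d+2]_Q - Q^{d+1}`. It equals `(c - 1) [m+d+2]_Q + ([m+d+2]_Q - Q^{d+1})`, where the subtracted
terms `1` and `Q^{d+1}` are summands of `c` (as `ℓ ≥ 1`) and of `[m+d+2]_Q`.
-/

open Finset Polynomial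

section QIntSemiring

variable {R : Type*} [CommSemiring R]

theorem qint_one (q : R) : qint q 1 = 1 := by
  simp [qint]

theorem qint_succ (q : R) (n : ℕ) : qint q (n + 1) = qint q n + q ^ n :=
  sum_range_succ _ n

theorem qint_add (q : R) (m n : ℕ) : qint q (m + n) = qint q m + q ^ m * qint q n := by
  simp only [qint, sum_range_add, pow_add, mul_sum]

theorem qint_mul (q : R) (m n : ℕ) : qint q (m * n) = qint q m * qint (q ^ m) n := by
  induction n with
  | zero => simp [qint]
  | succ n ih => rw [mul_add_one, qint_add, ih, qint_succ, pow_mul]; ring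

theorem qint_mem {S : Subsemiring R} {q : R} (hq : q ∈ S) (n : ℕ) : qint q n ∈ S :=
  sum_mem fun i _ ↦ pow_mem hq i

end QIntSemiring

section CommRing

variable {R : Type*} [CommRing R]

theorem qint_sub_pow_mem {S : Subsemiring R} {q : R} (hq : q ∈ S) {j n : ℕ} (hj : j < n) :
    qint q n - q ^ j ∈ S := by
  have h_erase : qint q n - q ^ j = ∑ i ∈ (range n).erase j, q ^ i := by
    rw [qint, ← sum_erase_add _ _ (mem_range.2 hj), add_sub_cancel_right]
  rw [h_erase]
  exact sum_mem fun i _ ↦ pow_mem hq i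

theorem mul_qint_sub_pow_mem {S : Subsemiring R} {q c : R} (hq : q ∈ S) (hc : c - 1 ∈ S)
    {j n : ℕ} (hj : j < n) : c * qint q n - q ^ j ∈ S := by
  have h_split : c * qint q n - q ^ j = (c - 1) * qint q n + (qint q n - q ^ j) := by ring
  rw [h_split]
  exact add_mem (mul_mem hc (qint_mem hq n)) (qint_sub_pow_mem hq hj)

/-- The iterated `Q`-difference `Δ^d u = (E - Q^{d-1}) ⋯ (E - Q) (E - 1) u` of a sequence `u`,
where `E` is the shift `(E u)(m) = u(m+1)`; its value at `m` is `qDiff Q u d m`. -/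
def qDiff (Q : R) (u : ℕ → R) : ℕ → ℕ → R
  | 0, m => u m
  | d + 1, m => qDiff Q u d (m + 1) - Q ^ d * qDiff Q u d m

theorem qDiff_zero (Q : R) (u : ℕ → R) (m : ℕ) : qDiff Q u 0 m = u m := rfl

theorem qDiff_succ (Q : R) (u : ℕ → R) (d m : ℕ) :
    qDiff Q u (d + 1) m = qDiff Q u d (m + 1) - Q ^ d * qDiff Q u d m := rfl

theorem qDiff_comp_succ (Q : R) (u : ℕ → R) (d m : ℕ) :
    qDiff Q (fun n ↦ u (n + 1)) d m = qDiff Q u d (m + 1) := by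
  induction d generalizing m with
  | zero => rfl
  | succ d ih => simp only [qDiff_succ, ih]

theorem qDiff_const_mul (Q c : R) (u : ℕ → R) (d m : ℕ) :
    qDiff Q (fun n ↦ c * u n) d m = c * qDiff Q u d m := by
  induction d generalizing m with
  | zero => rfl
  | succ d ih => rw [qDiff_succ, ih, ih, qDiff_succ]; ring

theorem qDiff_qint_mul (Q : R) (u : ℕ → R) (k d m : ℕ) :
    qDiff Q (fun n ↦ qint Q (n + k) * u n) (d + 1) m =
      qint Q (m + d + k + 1) * qDiff Q u (d + 1) m +
        Q ^ (m + d + k) * qint Q (d + 1) * qDiff Q u d m := by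
  induction d generalizing m with
  | zero =>
    simp only [qDiff_succ, qDiff_zero, add_right_comm m 1 k, add_zero, zero_add, pow_zero,
      qint_succ Q (m + k), qint_one]
    ring
  | succ d ih =>
    have h_index : m + 1 + d + k = m + d + k + 1 := by ring
    have h_index' : m + (d + 1) + k = m + d + k + 1 := by ring
    rw [qDiff_succ, ih, ih, h_index, h_index', qDiff_succ Q u (d + 1) m, qDiff_succ Q u d m,
      qint_succ Q (m + d + k + 1), qint_succ Q (d + 1)]
    ring

theorem qDiff_succ_succ_of_ratio {Q c : R} {u : ℕ → R}
    (hu : ∀ m, u (m + 1) = c * (qint Q (m + 1) * u m)) (d m : ℕ) :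
    qDiff Q u (d + 1) (m + 1) =
      c * (qint Q (m + d + 2) * qDiff Q u (d + 1) m +
        Q ^ (m + d + 1) * qint Q (d + 1) * qDiff Q u d m) := by
  rw [← qDiff_comp_succ, funext hu, qDiff_const_mul, qDiff_qint_mul]

theorem qDiff_one_of_ratio {Q c : R} {u : ℕ → R}
    (hu : ∀ m, u (m + 1) = c * (qint Q (m + 1) * u m)) (m : ℕ) :
    qDiff Q u 1 m = (c * qint Q (m + 1) - Q ^ 0) * u m := by
  rw [qDiff_succ, qDiff_zero, qDiff_zero, hu]
  ring

theorem qDiff_add_two_of_ratio {Q c : R} {u : ℕ → R}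
    (hu : ∀ m, u (m + 1) = c * (qint Q (m + 1) * u m)) (d m : ℕ) :
    qDiff Q u (d + 2) m =
      (c * qint Q (m + d + 2) - Q ^ (d + 1)) * qDiff Q u (d + 1) m +
        c * (Q ^ (m + d + 1) * qint Q (d + 1) * qDiff Q u d m) := by
  rw [qDiff_succ, qDiff_succ_succ_of_ratio hu]
  ring

theorem qDiff_mem_of_ratio {S : Subsemiring R} {Q c : R} {u : ℕ → R} (hQ : Q ∈ S)
    (hc : c - 1 ∈ S) (hu₀ : u 0 ∈ S) (hu : ∀ m, u (m + 1) = c * (qint Q (m + 1) * u m))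
    (d m : ℕ) : qDiff Q u d m ∈ S := by
  have hc_mem : c ∈ S := sub_add_cancel c 1 ▸ add_mem hc (one_mem S)
  have hu_mem (m : ℕ) : u m ∈ S := by
    induction m with
    | zero => exact hu₀
    | succ m ih => rw [hu]; exact mul_mem hc_mem (mul_mem (qint_mem hQ _) ih)
  induction d using Nat.twoStepInduction with
  | zero => exact hu_mem m
  | one =>
    rw [qDiff_one_of_ratio hu]
    exact mul_mem (mul_qint_sub_pow_mem hQ hc m.succ_pos) (hu_mem m)
  | more d ih₀ ih₁ =>
    rw [qDiff_add_two_of_ratio hu]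
    exact add_mem (mul_mem (mul_qint_sub_pow_mem hQ hc (by omega)) ih₁)
      (mul_mem hc_mem (mul_mem (mul_mem (pow_mem hQ _) (qint_mem hQ _)) ih₀))

theorem eq_qDiff_of_difference_table {Q : R} {G : ℕ → ℕ → R}
    (hrec : ∀ n m, m < n → G n m = G n (m + 1) - Q ^ (n - m - 1) * G (n - 1) m) (d m : ℕ) :
    G (m + d) m = qDiff Q (fun n ↦ G n n) d m := by
  induction d generalizing m with
  | zero => rfl
  | succ d ih =>
    have h_exp : m + (d + 1) - m - 1 = d := by omega
    rw [hrec _ _ (by omega), h_exp, qDiff_succ, ← ih, ← ih, add_right_comm m 1 d]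
    rfl

end CommRing

theorem q_difference_table_nonneg_coefficients_general {R : Type*} [CommRing R]
    {S : Subsemiring R} {q : R} (hq : q ∈ S) (ℓ : ℕ) (hℓ : 1 ≤ ℓ) (G : ℕ → ℕ → R)
    (hdiag : ∀ n, G n n = ∏ j ∈ Icc 1 n, qint q (j * ℓ))
    (hrec : ∀ n m, m < n → G n m = G n (m + 1) - q ^ (ℓ * (n - m - 1)) * G (n - 1) m)
    {n m : ℕ} (hmn : m ≤ n) : G n m ∈ S := by
  have h_ratio (m : ℕ) :
      G (m + 1) (m + 1) = qint q ℓ * (qint (q ^ ℓ) (m + 1) * G m m) := by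
    rw [hdiag, hdiag, prod_Icc_succ_top (by omega), mul_comm (m + 1) ℓ, qint_mul]
    ring
  have h_zero : G 0 0 ∈ S := by simp [hdiag]
  have h_sub_one : qint q ℓ - 1 ∈ S := by simpa using qint_sub_pow_mem hq hℓ
  obtain ⟨d, rfl⟩ := Nat.exists_eq_add_of_le hmn
  simp only [pow_mul] at hrec
  rw [eq_qDiff_of_difference_table hrec]
  exact qDiff_mem_of_ratio (u := fun n ↦ G n n) (pow_mem hq ℓ) h_sub_one h_zero h_ratio d m

theorem coeff_nonneg_of_mem_lifts {R : Type*} [Semiring R] [PartialOrder R] [IsOrderedRing R]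
    {p : R[X]} (hp : p ∈ lifts (Nat.castRingHom R)) (k : ℕ) : 0 ≤ p.coeff k := by
  obtain ⟨a, ha⟩ := (lifts_iff_coeff_lifts p).1 hp k
  exact ha ▸ Nat.cast_nonneg a

/-- If the wreath-product q-Euler difference table `G n m = g_{ℓ,n}^m(q)` is
defined by the diagonal values `g_{ℓ,n}^n(q) = [ℓ]_q[2ℓ]_q⋯[nℓ]_q` and the recurrence
`g_{ℓ,n}^m(q) = g_{ℓ,n}^{m+1}(q) − q^{ℓ(n−m−1)} g_{ℓ,n−1}^m(q)` for `0 ≤ m ≤ n−1`,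
then each `g_{ℓ,n}^m(q)` (for `m ≤ n`) has nonnegative integer coefficients. -/
theorem q_difference_table_nonneg_coefficients (ℓ : ℕ) (hℓ : 1 ≤ ℓ)
    (G : ℕ → ℕ → Polynomial ℤ)
    (hdiag : ∀ n, G n n = ∏ j ∈ Icc 1 n, qint (X : Polynomial ℤ) (j * ℓ))
    (hrec : ∀ n m, m < n →
      G n m = G n (m + 1) - (X : Polynomial ℤ) ^ (ℓ * (n - m - 1)) * G (n - 1) m) :
    ∀ n m, m ≤ n → ∀ k, 0 ≤ (G n m).coeff k := by
  intro n m hmn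
  exact coeff_nonneg_of_mem_lifts
    (q_difference_table_nonneg_coefficients_general (X_mem_lifts _) ℓ hℓ G hdiag hrec hmn)
end
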